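/- Let x_1,…,x_N ∈ ℝ^m be partitioned into k clusters of sizes n_1,…,n_k and set X := Σ_{a=1}^k (1/n_a)·1_a 1_aᵀ. Let Ψ be the m×N matrix whose column corresponding to a point x in cluster a is x − c_a, where c_a is the average of the points in cluster a. Define M, z, u, ρ as in the context and assume ρ_{(a,b)} > 0 for all a ≠ b. If 2‖Ψ‖²_{2→2} + Σ_{a=1}^k Σ_{b=a+1}^k ‖P_{1⊥}M^{(a,b)}1‖₂·‖P_{1⊥}M^{(b,a)}1‖₂ / ρ_{(a,b)} ≤ z, then X solves the k-means SDP. -/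

import Mathlib

open scoped BigOperators
open Matrix

namespace Stmt3

/-- Index type for `N` points partitioned into `k` clusters of sizes `n 0, …, n (k−1)`. -/
abbrev Idx (k : ℕ) (n : Fin k → ℕ) := (a : Fin k) × Fin (n a)

variable {m k : ℕ} {n : Fin k → ℕ}

/-- The matrix of squared pairwise distances `D_{pq} = ‖x_p − x_q‖₂²`. -/
noncomputable def sqDist (x : Idx k n → EuclideanSpace ℝ (Fin m)) :
    Matrix (Idx k n) (Idx k n) ℝ :=
  fun p q => ‖x p - x q‖ ^ 2

/-- Feasibility for the k-means SDP. -/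
def SDPFeasible (X : Matrix (Idx k n) (Idx k n) ℝ) : Prop :=
  X.trace = (k : ℝ) ∧ X *ᵥ (fun _ => (1 : ℝ)) = (fun _ => (1 : ℝ)) ∧
    (∀ p q, 0 ≤ X p q) ∧ X.PosSemidef

/-- `X` solves the k-means SDP for the points `x`. -/
noncomputable def SolvesSDP (x : Idx k n → EuclideanSpace ℝ (Fin m))
    (X : Matrix (Idx k n) (Idx k n) ℝ) : Prop :=
  SDPFeasible X ∧ ∀ Y : Matrix (Idx k n) (Idx k n) ℝ, SDPFeasible Y →
    (sqDist x * X).trace ≤ (sqDist x * Y).trace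

/-- The correction term `φ(p) = (1/n_a²)·1ᵀD^{(a,a)}1 − (2/n_a)·e_pᵀD^{(a,a)}1`. -/
noncomputable def phi (x : Idx k n → EuclideanSpace ℝ (Fin m)) (p : Idx k n) : ℝ :=
  ((n p.1 : ℝ) ^ 2)⁻¹ * (∑ i : Fin (n p.1), ∑ j : Fin (n p.1), sqDist x ⟨p.1, i⟩ ⟨p.1, j⟩)
    - (2 / (n p.1 : ℝ)) * ∑ j : Fin (n p.1), sqDist x p ⟨p.1, j⟩

/-- The matrix `M = D + (1/2)(φ1ᵀ + 1φᵀ)`. -/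
noncomputable def Mmat (x : Idx k n → EuclideanSpace ℝ (Fin m)) :
    Matrix (Idx k n) (Idx k n) ℝ :=
  fun p q => sqDist x p q + phi x p / 2 + phi x q / 2

/-- The vector `M^{(a,b)}1 ∈ ℝ^{n_a}`. -/
noncomputable def Mrow (x : Idx k n → EuclideanSpace ℝ (Fin m)) (a b : Fin k)
    (i : Fin (n a)) : ℝ :=
  ∑ j : Fin (n b), Mmat x ⟨a, i⟩ ⟨b, j⟩

/-- The vector `u_{(a,b)} = M^{(a,b)}1 − z·((n_a + n_b)/(2n_a))·1`. -/
noncomputable def uvec (x : Idx k n → EuclideanSpace ℝ (Fin m)) (z : ℝ) (a b : Fin k)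
    (i : Fin (n a)) : ℝ :=
  Mrow x a b i - z * (((n a : ℝ) + (n b : ℝ)) / (2 * (n a : ℝ)))

/-- The scalar `ρ_{(a,b)} = u_{(a,b)}ᵀ1`. -/
noncomputable def rho (x : Idx k n → EuclideanSpace ℝ (Fin m)) (z : ℝ) (a b : Fin k) : ℝ :=
  ∑ i : Fin (n a), uvec x z a b i

/-- The empirical center of cluster `a`. -/
noncomputable def center (x : Idx k n → EuclideanSpace ℝ (Fin m)) (a : Fin k) :
    EuclideanSpace ℝ (Fin m) :=
  ((n a : ℝ))⁻¹ • ∑ i : Fin (n a), x ⟨a, i⟩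

/-- The `m × N` matrix `Ψ` whose column for the point `x_{a,i}` is `x_{a,i} − c_a`. -/
noncomputable def Psi (x : Idx k n → EuclideanSpace ℝ (Fin m)) :
    Matrix (Fin m) (Idx k n) ℝ :=
  fun t p => (x p - center x p.1) t

/-- The spectral norm (`2→2` operator norm) of a rectangular matrix. -/
noncomputable def specNorm {α β : Type*} [Fintype α] [Fintype β] [DecidableEq β]
    (A : Matrix α β ℝ) : ℝ :=
  ‖LinearMap.toContinuousLinearMap (Matrix.toEuclideanLin A)‖

/-- The Euclidean norm `‖P_{1⊥} M^{(a,b)}1‖₂` of the projection of `M^{(a,b)}1`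
onto the orthogonal complement of the all-ones vector. -/
noncomputable def MrowPerpNorm (x : Idx k n → EuclideanSpace ℝ (Fin m)) (a b : Fin k) : ℝ :=
  Real.sqrt (∑ i : Fin (n a),
    (Mrow x a b i - (∑ j : Fin (n a), Mrow x a b j) / (n a : ℝ)) ^ 2)

end Stmt3

open Stmt3

/-!
The planted matrix `X` is the orthogonal projection onto the span of the cluster indicators.  The
dual certificate is the slack matrix

  `Q = M - B - (c 1ᵀ + 1 cᵀ) + z I`,  where `c p = z / (2 n_a)` for `p` in cluster `a`,

and `B` has the off-diagonal blocks `u_{(a,b)} u_{(b,a)}ᵀ / ρ_{(a,b)}` and zero diagonal blocks.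
These blocks make `Q X = 0`; hence `Q` is positive semidefinite as soon as its quadratic form is
nonnegative on vectors whose sum over each cluster vanishes.  On such a vector `v` the form of `M`
is `-2 ‖Ψ v‖²`, that of `c 1ᵀ + 1 cᵀ` is zero, and Cauchy–Schwarz bounds that of `B`, so the
certificate inequality gives `0 ≤ vᵀ Q v`.

If `Y` is feasible, then `⟨Q, Y⟩ ≥ 0` and `⟨B, Y⟩ ≥ 0`, while `⟨c 1ᵀ + 1 cᵀ, Y⟩ = z k = ⟨z I, Y⟩`.
Therefore `⟨M, Y⟩ ≥ 0 = ⟨M, X⟩`, and `⟨M, ·⟩ - ⟨D, ·⟩` is constant on the feasible set.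
-/

namespace Stmt3

section MatrixLemmas

variable {ι : Type*} [Fintype ι]

section RCLike

open scoped ComplexOrder

variable {𝕜 : Type*} [RCLike 𝕜]

lemma trace_mul_nonneg_of_posSemidef {A B : Matrix ι ι 𝕜} (hA : A.PosSemidef)
    (hB : B.PosSemidef) : 0 ≤ (A * B).trace := by
  obtain ⟨r, w, rfl⟩ := posSemidef_iff_eq_sum_vecMulVec.1 hB
  rw [Finset.mul_sum, trace_sum]
  refine Finset.sum_nonneg fun l _ => ?_
  rw [mul_vecMulVec, trace_vecMulVec, dotProduct_comm]
  exact hA.dotProduct_mulVec_nonneg (w l)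

lemma posSemidef_of_mul_idempotent_eq_zero {Q P : Matrix ι ι 𝕜}
    (hQ : Q.IsHermitian) (hP : IsIdempotentElem P) (hQP : Q * P = 0)
    (hker : ∀ v, P *ᵥ v = 0 → 0 ≤ star v ⬝ᵥ Q *ᵥ v) : Q.PosSemidef := by
  classical
  have hPQ : Pᴴ * Q = 0 := by simpa [hQ.eq] using congrArg conjTranspose hQP
  have hcompress : (1 - P)ᴴ * Q * (1 - P) = Q := by
    rw [conjTranspose_sub, conjTranspose_one, sub_mul, one_mul, hPQ, sub_zero, mul_sub, mul_one,
      hQP, sub_zero]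
  refine .of_dotProduct_mulVec_nonneg hQ fun w => ?_
  have hw : P *ᵥ ((1 - P) *ᵥ w) = 0 := by
    rw [mulVec_mulVec, hP.mul_one_sub_self, zero_mulVec]
  have := hker _ hw
  rwa [star_mulVec, ← dotProduct_mulVec, mulVec_mulVec, mulVec_mulVec, hcompress] at this

end RCLike

lemma trace_mul_nonneg_of_nonneg {R κ : Type*} [Fintype κ] [Semiring R] [PartialOrder R]
    [IsOrderedRing R] {A : Matrix ι κ R} {B : Matrix κ ι R} (hA : ∀ i j, 0 ≤ A i j)
    (hB : ∀ i j, 0 ≤ B i j) : 0 ≤ (A * B).trace :=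
  Finset.sum_nonneg fun i _ => Finset.sum_nonneg fun j _ => mul_nonneg (hA i j) (hB j i)

end MatrixLemmas

section OuterAdd

variable {ι R : Type*} [CommSemiring R]

/-- The matrix `c 1ᵀ + 1 cᵀ`, with entries `c i + c j`.  The multipliers of the row-sum constraint
enter the dual of the SDP in this form. -/
def outerAdd (c : ι → R) : Matrix ι ι R :=
  vecMulVec c 1 + vecMulVec 1 c

@[simp]
lemma outerAdd_apply (c : ι → R) (i j : ι) : outerAdd c i j = c i + c j := by
  simp [outerAdd]

variable [Fintype ι]

lemma dotProduct_outerAdd_mulVec_eq_zero (c : ι → R) {v : ι → R} (hv : ∑ i, v i = 0) :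
    v ⬝ᵥ outerAdd c *ᵥ v = 0 := by
  rw [outerAdd, add_mulVec, dotProduct_add, vecMulVec_mulVec, vecMulVec_mulVec, one_dotProduct, hv]
  simp [dotProduct_one, hv]

lemma trace_outerAdd_mul (c : ι → R) {Y : Matrix ι ι R} (hsymm : Y.IsSymm) (hone : Y *ᵥ 1 = 1) :
    (outerAdd c * Y).trace = 2 * ∑ i, c i := by
  have hone' : 1 ᵥ* Y = 1 := by rw [← mulVec_transpose, hsymm.eq, hone]
  rw [outerAdd, add_mul, trace_add, vecMulVec_mul, vecMulVec_mul, trace_vecMulVec,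
    trace_vecMulVec, hone', dotProduct_comm 1, ← dotProduct_mulVec, hone, dotProduct_one, two_mul]

end OuterAdd

lemma mulVec_dotProduct_self_le_specNorm_sq {α β : Type*} [Fintype α] [Fintype β] [DecidableEq β]
    (A : Matrix α β ℝ) (v : β → ℝ) :
    (A *ᵥ v) ⬝ᵥ (A *ᵥ v) ≤ specNorm A ^ 2 * (v ⬝ᵥ v) := by
  have hnorm : ‖WithLp.toLp 2 (A *ᵥ v)‖ ≤ specNorm A * ‖WithLp.toLp 2 v‖ :=
    (LinearMap.toContinuousLinearMap (toEuclideanLin A)).le_opNorm (WithLp.toLp 2 v)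
  have hsq := pow_le_pow_left₀ (norm_nonneg _) hnorm 2
  rw [mul_pow, EuclideanSpace.real_norm_sq_eq, EuclideanSpace.real_norm_sq_eq] at hsq
  simpa only [dotProduct, ← pow_two] using hsq

lemma abs_dotProduct_le_of_sum_eq_zero {ι : Type*} [Fintype ι] (f : ι → ℝ) (c : ℝ) {v : ι → ℝ}
    (hv : ∑ i, v i = 0) : |f ⬝ᵥ v| ≤ √(∑ i, (f i - c) ^ 2) * √(∑ i, v i ^ 2) := by
  have hshift : f ⬝ᵥ v = ∑ i, (f i - c) * v i := by
    simp only [dotProduct, sub_mul, Finset.sum_sub_distrib, ← Finset.mul_sum, hv, mul_zero,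
      sub_zero]
  rw [hshift, ← Real.sqrt_mul (Finset.sum_nonneg fun _ _ => sq_nonneg _)]
  exact Real.abs_le_sqrt (Finset.sum_mul_sq_le_sq_mul_sq _ _ _)

lemma two_mul_mul_le_of_abs_le_mul_sqrt {s t α β A B : ℝ} (hA : 0 ≤ A) (hB : 0 ≤ B) (hα : 0 ≤ α)
    (hβ : 0 ≤ β) (hs : |s| ≤ α * √A) (ht : |t| ≤ β * √B) :
    2 * (s * t) ≤ α * β * (A + B) := by
  calc 2 * (s * t) ≤ 2 * (|s| * |t|) := by rw [← abs_mul]; gcongr; exact le_abs_self _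
    _ ≤ 2 * ((α * √A) * (β * √B)) := by gcongr
    _ = α * β * (2 * √A * √B) := by ring
    _ ≤ α * β * (√A ^ 2 + √B ^ 2) := by gcongr; exact two_mul_le_add_sq _ _
    _ = α * β * (A + B) := by rw [Real.sq_sqrt hA, Real.sq_sqrt hB]

section PlantedMatrix

variable {k : ℕ} {n : Fin k → ℕ}

/-- The planted solution `∑ₐ (1/nₐ) 1ₐ 1ₐᵀ`, which averages a vector over each cluster. -/
noncomputable def clusterMatrix (n : Fin k → ℕ) : Matrix (Idx k n) (Idx k n) ℝ :=
  fun p q => if p.1 = q.1 then ((n p.1 : ℝ))⁻¹ else 0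

lemma isHermitian_clusterMatrix (n : Fin k → ℕ) : (clusterMatrix n).IsHermitian := by
  ext ⟨a, i⟩ ⟨b, j⟩
  by_cases h : a = b
  · simp [clusterMatrix, h]
  · simp [clusterMatrix, h, Ne.symm h]

lemma clusterMatrix_nonneg (p q : Idx k n) : 0 ≤ clusterMatrix n p q := by
  unfold clusterMatrix
  positivity

lemma clusterMatrix_mulVec_apply (v : Idx k n → ℝ) (p : Idx k n) :
    (clusterMatrix n *ᵥ v) p = (n p.1 : ℝ)⁻¹ * ∑ i, v ⟨p.1, i⟩ := by
  rw [mulVec, dotProduct, Fintype.sum_sigma, Finset.sum_eq_single p.1]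
  · simp [clusterMatrix, Finset.mul_sum]
  · intro b _ hb
    simp [clusterMatrix, hb.symm]
  · simp

lemma mul_clusterMatrix_apply {ι : Type*} (A : Matrix ι (Idx k n) ℝ) (i : ι) (q : Idx k n) :
    (A * clusterMatrix n) i q = (n q.1 : ℝ)⁻¹ * ∑ j, A i ⟨q.1, j⟩ := by
  rw [← clusterMatrix_mulVec_apply (A i) q, mul_apply', mulVec, dotProduct_comm]
  congr 1
  exact funext fun p => (isHermitian_clusterMatrix n).apply q p

lemma clusterMatrix_mulVec_one (n : Fin k → ℕ) : clusterMatrix n *ᵥ 1 = 1 := by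
  ext p
  have : (n p.1 : ℝ) ≠ 0 := by exact_mod_cast p.2.pos.ne'
  simp [clusterMatrix_mulVec_apply, this]

lemma isIdempotentElem_clusterMatrix (n : Fin k → ℕ) : IsIdempotentElem (clusterMatrix n) := by
  ext p q
  have : (n q.1 : ℝ) ≠ 0 := by exact_mod_cast q.2.pos.ne'
  by_cases h : p.1 = q.1 <;> simp [mul_clusterMatrix_apply, clusterMatrix, h, this]

lemma sum_cluster_eq_zero_of_clusterMatrix_mulVec_eq_zero {v : Idx k n → ℝ}
    (hv : clusterMatrix n *ᵥ v = 0) (a : Fin k) : ∑ i, v ⟨a, i⟩ = 0 := by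
  rcases isEmpty_or_nonempty (Fin (n a)) with _ | ⟨⟨i⟩⟩
  · simp
  · have hmean := congrFun hv ⟨a, i⟩
    have : (n a : ℝ) ≠ 0 := by exact_mod_cast i.pos.ne'
    simpa [clusterMatrix_mulVec_apply, this] using hmean

lemma sum_inv_clusterSize (hn : ∀ a, 0 < n a) : ∑ p : Idx k n, (n p.1 : ℝ)⁻¹ = k := by
  have : ∀ a, (n a : ℝ) ≠ 0 := fun a => by exact_mod_cast (hn a).ne'
  simp [Fintype.sum_sigma, this]

lemma sdpFeasible_clusterMatrix (hn : ∀ a, 0 < n a) : SDPFeasible (clusterMatrix n) := by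
  refine ⟨?_, clusterMatrix_mulVec_one n, clusterMatrix_nonneg, ?_⟩
  · simpa [trace, clusterMatrix] using sum_inv_clusterSize hn
  · have hproj : (clusterMatrix n)ᴴ * clusterMatrix n = clusterMatrix n := by
      rw [(isHermitian_clusterMatrix n).eq, (isIdempotentElem_clusterMatrix n).eq]
    rw [← hproj]
    exact posSemidef_conjTranspose_mul_self _

end PlantedMatrix

section Distances

variable {m k : ℕ} {n : Fin k → ℕ} (x : Idx k n → EuclideanSpace ℝ (Fin m))

lemma isSymm_sqDist : (sqDist x).IsSymm := by
  ext p q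
  rw [transpose_apply, sqDist, sqDist, norm_sub_rev]

lemma Mmat_eq_sqDist_add_outerAdd : Mmat x = sqDist x + outerAdd (fun p => phi x p / 2) := by
  ext p q
  simp [Mmat, add_assoc]

lemma Mmat_comm (p q : Idx k n) : Mmat x p q = Mmat x q p := by
  rw [Mmat, Mmat, ← (isSymm_sqDist x).apply p q]
  ring

lemma sum_phi_cluster (a : Fin k) :
    ∑ i, phi x ⟨a, i⟩ = -((n a : ℝ)⁻¹ * ∑ i, ∑ j, sqDist x ⟨a, i⟩ ⟨a, j⟩) := by
  have hphi : ∀ i, phi x ⟨a, i⟩ = ((n a : ℝ) ^ 2)⁻¹ * (∑ i, ∑ j, sqDist x ⟨a, i⟩ ⟨a, j⟩) -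
      2 / (n a : ℝ) * ∑ j, sqDist x ⟨a, i⟩ ⟨a, j⟩ := fun _ => rfl
  simp only [hphi]
  rw [Finset.sum_sub_distrib, Finset.sum_const, Finset.card_univ, Fintype.card_fin, nsmul_eq_mul,
    ← Finset.mul_sum]
  rcases eq_or_ne (n a : ℝ) 0 with h | h
  · simp [h]
  · field_simp
    ring

lemma Mrow_self (a : Fin k) (i : Fin (n a)) : Mrow x a a i = 0 := by
  have : (n a : ℝ) ≠ 0 := by exact_mod_cast i.pos.ne'
  simp only [Mrow, Mmat]
  rw [Finset.sum_add_distrib, Finset.sum_add_distrib, ← Finset.sum_div, ← Finset.sum_div,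
    sum_phi_cluster, Finset.sum_const, Finset.card_univ, Fintype.card_fin, nsmul_eq_mul, phi]
  field_simp
  ring

lemma trace_Mmat_mul_clusterMatrix : (Mmat x * clusterMatrix n).trace = 0 := by
  refine Finset.sum_eq_zero fun p _ => ?_
  rw [diag_apply, mul_clusterMatrix_apply]
  exact mul_eq_zero_of_right _ (Mrow_self x p.1 p.2)

lemma dotProduct_sqDist_mulVec {v : Idx k n → ℝ} (hv : ∑ p, v p = 0) :
    v ⬝ᵥ sqDist x *ᵥ v = -2 * ‖∑ p, v p • x p‖ ^ 2 := by
  rw [← real_inner_self_eq_norm_sq, inner_sum_smul_sum_smul_of_sum_eq_zero x hv x hv]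
  simp only [dotProduct, mulVec, sqDist, Finset.mul_sum, ← Finset.sum_neg_distrib, Finset.sum_div]
  refine Finset.sum_congr rfl fun p _ => Finset.sum_congr rfl fun q _ => ?_
  ring

lemma Psi_mulVec_eq_sum_smul {v : Idx k n → ℝ} (hv : ∀ a, ∑ i, v ⟨a, i⟩ = 0) :
    WithLp.toLp 2 (Psi x *ᵥ v) = ∑ p, v p • x p := by
  have hcenter : ∑ p : Idx k n, v p • center x p.1 = 0 := by
    simp [Fintype.sum_sigma, ← Finset.sum_smul, hv]
  calc WithLp.toLp 2 (Psi x *ᵥ v) = ∑ p, v p • (x p - center x p.1) := by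
        ext t
        simp [mulVec, dotProduct, Psi, mul_comm]
    _ = ∑ p, v p • x p := by
        simp only [smul_sub, Finset.sum_sub_distrib, hcenter, sub_zero]

lemma dotProduct_Mmat_mulVec {v : Idx k n → ℝ} (hv : ∀ a, ∑ i, v ⟨a, i⟩ = 0) :
    v ⬝ᵥ Mmat x *ᵥ v = -2 * ((Psi x *ᵥ v) ⬝ᵥ (Psi x *ᵥ v)) := by
  have hsum : ∑ p, v p = 0 := by simp [Fintype.sum_sigma, hv]
  rw [Mmat_eq_sqDist_add_outerAdd, add_mulVec, dotProduct_add,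
    dotProduct_outerAdd_mulVec_eq_zero _ hsum, add_zero, dotProduct_sqDist_mulVec x hsum,
    ← Psi_mulVec_eq_sum_smul x hv, EuclideanSpace.real_norm_sq_eq]
  simp only [dotProduct, ← pow_two]

end Distances

section CrossMatrix

variable {m k : ℕ} {n : Fin k → ℕ} (x : Idx k n → EuclideanSpace ℝ (Fin m)) (z : ℝ)

lemma uvec_nonneg_iff {a b : Fin k} (i : Fin (n a)) :
    0 ≤ uvec x z a b i ↔ z ≤ 2 * (n a : ℝ) / ((n a : ℝ) + (n b : ℝ)) * Mrow x a b i := by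
  have hpos : (0 : ℝ) < n a := by exact_mod_cast i.pos
  rw [uvec, sub_nonneg, ← le_div_iff₀ (by positivity)]
  refine iff_of_eq (congrArg (z ≤ ·) ?_)
  field_simp

lemma rho_comm (hn : ∀ a, 0 < n a) (a b : Fin k) : rho x z a b = rho x z b a := by
  have ha : (n a : ℝ) ≠ 0 := by exact_mod_cast (hn a).ne'
  have hb : (n b : ℝ) ≠ 0 := by exact_mod_cast (hn b).ne'
  simp only [rho, uvec, Mrow, Finset.sum_sub_distrib, Finset.sum_const, Finset.card_univ,
    Fintype.card_fin, nsmul_eq_mul]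
  rw [Finset.sum_comm]
  simp only [Mmat_comm x ⟨a, _⟩]
  congr 1
  field_simp
  ring

lemma abs_uvec_dotProduct_le {a b : Fin k} {v : Fin (n a) → ℝ} (hv : ∑ i, v i = 0) :
    |uvec x z a b ⬝ᵥ v| ≤ MrowPerpNorm x a b * √(∑ i, v i ^ 2) := by
  have h := abs_dotProduct_le_of_sum_eq_zero (uvec x z a b)
    ((∑ j, Mrow x a b j) / n a - z * (((n a : ℝ) + n b) / (2 * n a))) hv
  simpa only [uvec, MrowPerpNorm, sub_sub_sub_cancel_right] using h

/-- The multiplier of the constraint `0 ≤ X`: its `(a, b)` block is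
`u_{(a,b)} u_{(b,a)}ᵀ / ρ_{(a,b)}` for `a ≠ b`, and its diagonal blocks vanish. -/
noncomputable def crossMatrix : Matrix (Idx k n) (Idx k n) ℝ :=
  fun p q => if p.1 = q.1 then 0 else
    uvec x z p.1 q.1 p.2 * uvec x z q.1 p.1 q.2 / rho x z p.1 q.1

lemma crossMatrix_comm (hn : ∀ a, 0 < n a) (p q : Idx k n) :
    crossMatrix x z p q = crossMatrix x z q p := by
  simp only [crossMatrix, eq_comm (a := p.1), rho_comm x z hn p.1, mul_comm (uvec x z p.1 q.1 p.2)]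

variable {x z} in
lemma crossMatrix_nonneg (hu : ∀ a b, a ≠ b → ∀ i, 0 ≤ uvec x z a b i) (p q : Idx k n) :
    0 ≤ crossMatrix x z p q := by
  rw [crossMatrix]
  split_ifs with h
  · exact le_rfl
  · exact div_nonneg (mul_nonneg (hu _ _ h _) (hu _ _ (Ne.symm h) _))
      (Finset.sum_nonneg fun i _ => hu _ _ h i)

variable {x z} in
lemma sum_crossMatrix_cluster (hn : ∀ a, 0 < n a) (p : Idx k n) {b : Fin k} (hb : p.1 ≠ b)
    (hρ : rho x z p.1 b ≠ 0) : ∑ j, crossMatrix x z p ⟨b, j⟩ = uvec x z p.1 b p.2 := by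
  simp only [crossMatrix, hb, if_false, ← Finset.sum_div, ← Finset.mul_sum]
  rw [← rho, rho_comm x z hn b, mul_div_cancel_right₀ _ hρ]

lemma dotProduct_crossMatrix_mulVec (v : Idx k n → ℝ) :
    v ⬝ᵥ crossMatrix x z *ᵥ v = ∑ a, ∑ b ∈ {a}ᶜ,
      (uvec x z a b ⬝ᵥ fun i => v ⟨a, i⟩) * (uvec x z b a ⬝ᵥ fun j => v ⟨b, j⟩) / rho x z a b := by
  simp only [dotProduct, mulVec, Fintype.sum_sigma, Finset.mul_sum]
  refine Finset.sum_congr rfl fun a _ => ?_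
  have hdiag : ∑ i, ∑ j, v ⟨a, i⟩ * (crossMatrix x z ⟨a, i⟩ ⟨a, j⟩ * v ⟨a, j⟩) = 0 := by
    simp [crossMatrix]
  rw [Finset.sum_comm, ← Finset.sum_add_sum_compl {a}, Finset.sum_singleton, hdiag, zero_add]
  refine Finset.sum_congr rfl fun b hb => ?_
  have hab : a ≠ b := by simpa [eq_comm] using hb
  simp only [crossMatrix, hab, if_false, Finset.sum_mul, Finset.sum_div]
  rw [Finset.sum_comm]
  refine Finset.sum_congr rfl fun j _ => Finset.sum_congr rfl fun i _ => ?_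
  ring

lemma sum_sq_cluster_add_le (v : Idx k n → ℝ) {a b : Fin k} (hab : a ≠ b) :
    ∑ i, v ⟨a, i⟩ ^ 2 + ∑ j, v ⟨b, j⟩ ^ 2 ≤ v ⬝ᵥ v := by
  simp only [dotProduct, ← pow_two, Fintype.sum_sigma]
  exact Finset.add_le_sum (f := fun c => ∑ i, v ⟨c, i⟩ ^ 2)
    (fun _ _ => Finset.sum_nonneg fun _ _ => sq_nonneg _) (Finset.mem_univ a) (Finset.mem_univ b)
    hab

variable {x z} in
lemma dotProduct_crossMatrix_mulVec_le (hn : ∀ a, 0 < n a)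
    (hρ : ∀ a b : Fin k, a ≠ b → 0 < rho x z a b) {v : Idx k n → ℝ}
    (hv : ∀ a, ∑ i, v ⟨a, i⟩ = 0) :
    v ⬝ᵥ crossMatrix x z *ᵥ v ≤ (∑ a : Fin k, ∑ b ∈ Finset.Ioi a,
      MrowPerpNorm x a b * MrowPerpNorm x b a / rho x z a b) * (v ⬝ᵥ v) := by
  rw [dotProduct_crossMatrix_mulVec, ← Finset.sum_sum_Ioi_add_eq_sum_sum_off_diag, Finset.sum_mul]
  refine Finset.sum_le_sum fun a _ => ?_
  rw [Finset.sum_mul]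
  refine Finset.sum_le_sum fun b hb => ?_
  have hab : a ≠ b := (Finset.mem_Ioi.1 hb).ne
  set s := uvec x z a b ⬝ᵥ fun i => v ⟨a, i⟩
  set t := uvec x z b a ⬝ᵥ fun j => v ⟨b, j⟩
  have hpair : 2 * (s * t) ≤ MrowPerpNorm x a b * MrowPerpNorm x b a *
      (∑ i, v ⟨a, i⟩ ^ 2 + ∑ j, v ⟨b, j⟩ ^ 2) :=
    two_mul_mul_le_of_abs_le_mul_sqrt (Finset.sum_nonneg fun _ _ => sq_nonneg _)
      (Finset.sum_nonneg fun _ _ => sq_nonneg _) (Real.sqrt_nonneg _) (Real.sqrt_nonneg _)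
      (abs_uvec_dotProduct_le x z (hv a)) (abs_uvec_dotProduct_le x z (hv b))
  have hcoeff : 0 ≤ MrowPerpNorm x a b * MrowPerpNorm x b a :=
    mul_nonneg (Real.sqrt_nonneg _) (Real.sqrt_nonneg _)
  calc s * t / rho x z a b + t * s / rho x z b a = 2 * (s * t) / rho x z a b := by
        rw [rho_comm x z hn b a]
        ring
    _ ≤ MrowPerpNorm x a b * MrowPerpNorm x b a * (v ⬝ᵥ v) / rho x z a b :=
        div_le_div_of_nonneg_right
          (hpair.trans (mul_le_mul_of_nonneg_left (sum_sq_cluster_add_le v hab) hcoeff))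
          (hρ a b hab).le
    _ = MrowPerpNorm x a b * MrowPerpNorm x b a / rho x z a b * (v ⬝ᵥ v) := by ring

end CrossMatrix

section SlackMatrix

variable {m k : ℕ} {n : Fin k → ℕ} (x : Idx k n → EuclideanSpace ℝ (Fin m)) (z : ℝ)

/-- The slack matrix of the dual certificate: the dual variable of the semidefinite constraint, with
the coefficients `z / (2 n_a)` chosen so that its block row sums vanish. -/
noncomputable def slackMatrix : Matrix (Idx k n) (Idx k n) ℝ :=
  Mmat x - crossMatrix x z - outerAdd (fun p => z / (2 * n p.1)) + z • 1

lemma isHermitian_slackMatrix (hn : ∀ a, 0 < n a) : (slackMatrix x z).IsHermitian := by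
  ext p q
  simp [slackMatrix, Mmat_comm x q p, crossMatrix_comm x z hn q p, one_apply, eq_comm (a := q),
    add_comm (z / (2 * (n q.1 : ℝ)))]

variable {x z} in
lemma sum_slackMatrix_cluster (hn : ∀ a, 0 < n a)
    (hρ : ∀ a b : Fin k, a ≠ b → rho x z a b ≠ 0) (p : Idx k n) (b : Fin k) :
    ∑ j, slackMatrix x z p ⟨b, j⟩ = 0 := by
  obtain ⟨a, i⟩ := p
  have ha : (n a : ℝ) ≠ 0 := by exact_mod_cast (hn a).ne'
  have hb : (n b : ℝ) ≠ 0 := by exact_mod_cast (hn b).ne'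
  have hM : ∑ j, Mmat x ⟨a, i⟩ ⟨b, j⟩ = Mrow x a b i := rfl
  have hrow : ∑ j : Fin (n b), (z / (2 * n a) + z / (2 * n b)) =
      z * (((n a : ℝ) + n b) / (2 * n a)) := by
    rw [Finset.sum_const, Finset.card_univ, Fintype.card_fin, nsmul_eq_mul]
    field_simp
    ring
  simp only [slackMatrix, Matrix.add_apply, Matrix.sub_apply, Matrix.smul_apply, outerAdd_apply,
    smul_eq_mul]
  rw [Finset.sum_add_distrib, Finset.sum_sub_distrib, Finset.sum_sub_distrib, hM, hrow,
    ← Finset.mul_sum]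
  rcases eq_or_ne a b with rfl | hab
  · have hcross : ∑ j, crossMatrix x z ⟨a, i⟩ ⟨a, j⟩ = 0 :=
      Finset.sum_eq_zero fun j _ => if_pos rfl
    have hone : ∑ j, (1 : Matrix (Idx k n) (Idx k n) ℝ) ⟨a, i⟩ ⟨a, j⟩ = 1 := by
      simp [one_apply]
    rw [Mrow_self, hcross, hone]
    field_simp
    ring
  · have hone : ∑ j, (1 : Matrix (Idx k n) (Idx k n) ℝ) ⟨a, i⟩ ⟨b, j⟩ = 0 :=
      Finset.sum_eq_zero fun j _ => one_apply_ne fun h => hab (congrArg Sigma.fst h)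
    rw [sum_crossMatrix_cluster hn ⟨a, i⟩ hab (hρ a b hab), hone, uvec]
    ring

variable {x z} in
lemma slackMatrix_mul_clusterMatrix (hn : ∀ a, 0 < n a)
    (hρ : ∀ a b : Fin k, a ≠ b → rho x z a b ≠ 0) : slackMatrix x z * clusterMatrix n = 0 := by
  ext p q
  rw [mul_clusterMatrix_apply, sum_slackMatrix_cluster hn hρ, mul_zero, Matrix.zero_apply]

variable {x z} in
lemma dotProduct_slackMatrix_mulVec_nonneg (hn : ∀ a, 0 < n a)
    (hρ : ∀ a b : Fin k, a ≠ b → 0 < rho x z a b)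
    (hcert : 2 * specNorm (Psi x) ^ 2 + ∑ a : Fin k, ∑ b ∈ Finset.Ioi a,
      MrowPerpNorm x a b * MrowPerpNorm x b a / rho x z a b ≤ z)
    {v : Idx k n → ℝ} (hv : ∀ a, ∑ i, v ⟨a, i⟩ = 0) : 0 ≤ v ⬝ᵥ slackMatrix x z *ᵥ v := by
  have hsum : ∑ p, v p = 0 := by simp [Fintype.sum_sigma, hv]
  have hexpand : v ⬝ᵥ slackMatrix x z *ᵥ v =
      -2 * ((Psi x *ᵥ v) ⬝ᵥ (Psi x *ᵥ v)) - v ⬝ᵥ crossMatrix x z *ᵥ v + z * (v ⬝ᵥ v) := by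
    simp only [slackMatrix, add_mulVec, sub_mulVec, smul_mulVec, one_mulVec, dotProduct_add,
      dotProduct_sub, dotProduct_smul, smul_eq_mul, dotProduct_Mmat_mulVec x hv,
      dotProduct_outerAdd_mulVec_eq_zero _ hsum, sub_zero]
  have hPsi := mulVec_dotProduct_self_le_specNorm_sq (Psi x) v
  have hcross := dotProduct_crossMatrix_mulVec_le hn hρ hv
  have hscale := mul_le_mul_of_nonneg_right hcert (dotProduct_self_star_nonneg v)
  rw [star_trivial] at hscale
  linarith

variable {x z} in
lemma posSemidef_slackMatrix (hn : ∀ a, 0 < n a)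
    (hρ : ∀ a b : Fin k, a ≠ b → 0 < rho x z a b)
    (hcert : 2 * specNorm (Psi x) ^ 2 + ∑ a : Fin k, ∑ b ∈ Finset.Ioi a,
      MrowPerpNorm x a b * MrowPerpNorm x b a / rho x z a b ≤ z) :
    (slackMatrix x z).PosSemidef :=
  posSemidef_of_mul_idempotent_eq_zero (isHermitian_slackMatrix x z hn)
    (isIdempotentElem_clusterMatrix n)
    (slackMatrix_mul_clusterMatrix hn fun a b hab => (hρ a b hab).ne') fun _ hv =>
      dotProduct_slackMatrix_mulVec_nonneg hn hρ hcert
        (sum_cluster_eq_zero_of_clusterMatrix_mulVec_eq_zero hv)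

end SlackMatrix

section WeakDuality

variable {m k : ℕ} {n : Fin k → ℕ} {x : Idx k n → EuclideanSpace ℝ (Fin m)} {z : ℝ}
  {Y : Matrix (Idx k n) (Idx k n) ℝ}

lemma SDPFeasible.trace_outerAdd_mul (hY : SDPFeasible Y) (c : Idx k n → ℝ) :
    (outerAdd c * Y).trace = 2 * ∑ p, c p :=
  Stmt3.trace_outerAdd_mul c (isHermitian_iff_isSymm.1 hY.2.2.2.isHermitian) hY.2.1

lemma SDPFeasible.trace_sqDist_mul (hY : SDPFeasible Y)
    (x : Idx k n → EuclideanSpace ℝ (Fin m)) :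
    (sqDist x * Y).trace = (Mmat x * Y).trace - ∑ p, phi x p := by
  rw [Mmat_eq_sqDist_add_outerAdd, add_mul, trace_add, hY.trace_outerAdd_mul, ← Finset.sum_div]
  ring

lemma SDPFeasible.trace_Mmat_mul_nonneg (hY : SDPFeasible Y) (hn : ∀ a, 0 < n a)
    (hu : ∀ a b, a ≠ b → ∀ i, 0 ≤ uvec x z a b i) (hQ : (slackMatrix x z).PosSemidef) :
    0 ≤ (Mmat x * Y).trace := by
  have hslack : 0 ≤ (slackMatrix x z * Y).trace := trace_mul_nonneg_of_posSemidef hQ hY.2.2.2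
  have hcross : 0 ≤ (crossMatrix x z * Y).trace :=
    trace_mul_nonneg_of_nonneg (crossMatrix_nonneg hu) hY.2.2.1
  have hrow : (outerAdd (fun p : Idx k n => z / (2 * n p.1)) * Y).trace = z * k := by
    rw [hY.trace_outerAdd_mul, ← sum_inv_clusterSize hn, Finset.mul_sum, Finset.mul_sum]
    refine Finset.sum_congr rfl fun p _ => ?_
    ring
  rw [slackMatrix, add_mul, sub_mul, sub_mul, trace_add, trace_sub, trace_sub, hrow, smul_one_mul,
    trace_smul, hY.1, smul_eq_mul] at hslack
  linarith

end WeakDuality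

end Stmt3

/-- Since `ρ_{(a,b)}` decreases with `z`, the largest `z` for which all `u_{(a,b)}` are nonnegative
need not be the best choice. -/
theorem dual_certificate_corollary_implies_SDP_optimal_general
    {m k : ℕ} {n : Fin k → ℕ} (hn : ∀ a, 0 < n a) (x : Idx k n → EuclideanSpace ℝ (Fin m))
    (z : ℝ) (hu : ∀ a b, a ≠ b → ∀ i, 0 ≤ uvec x z a b i)
    (hρ : ∀ a b : Fin k, a ≠ b → 0 < rho x z a b)
    (hcert : 2 * specNorm (Psi x) ^ 2 +
        ∑ a : Fin k, ∑ b ∈ Finset.Ioi a,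
          MrowPerpNorm x a b * MrowPerpNorm x b a / rho x z a b ≤ z) :
    SolvesSDP x (clusterMatrix n) := by
  have hX : SDPFeasible (clusterMatrix n) := sdpFeasible_clusterMatrix hn
  refine ⟨hX, fun Y hY => ?_⟩
  have hQ : (slackMatrix x z).PosSemidef := posSemidef_slackMatrix hn hρ hcert
  calc (sqDist x * clusterMatrix n).trace = 0 - ∑ p, phi x p := by
        rw [hX.trace_sqDist_mul, trace_Mmat_mul_clusterMatrix]
    _ ≤ (Mmat x * Y).trace - ∑ p, phi x p := by
        gcongr
        exact hY.trace_Mmat_mul_nonneg hn hu hQ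
    _ = (sqDist x * Y).trace := (hY.trace_sqDist_mul x).symm

/-- (Corollary 2.5 of the paper.) With `M`, `z`, `u`, `ρ`, `Ψ` as
above and `ρ_{(a,b)} > 0` for all `a ≠ b`, if
`2‖Ψ‖²₂→₂ + Σ_a Σ_{b>a} ‖P_{1⊥}M^{(a,b)}1‖₂·‖P_{1⊥}M^{(b,a)}1‖₂/ρ_{(a,b)} ≤ z`,
then `X = Σ_a (1/n_a)·1_a1_aᵀ` solves the k-means SDP. -/
theorem dual_certificate_corollary_implies_SDP_optimal
    (m k : ℕ) (hk : 1 < k) (n : Fin k → ℕ) (hn : ∀ a, 0 < n a)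
    (x : Idx k n → EuclideanSpace ℝ (Fin m))
    (X : Matrix (Idx k n) (Idx k n) ℝ)
    (hX : X = fun p q => if p.1 = q.1 then ((n p.1 : ℝ))⁻¹ else 0)
    (z : ℝ)
    (hz : IsLeast {t : ℝ | ∃ (a b : Fin k) (i : Fin (n a)), a ≠ b ∧
      t = (2 * (n a : ℝ) / ((n a : ℝ) + (n b : ℝ))) * Mrow x a b i} z)
    (hρ : ∀ a b : Fin k, a ≠ b → 0 < rho x z a b)
    (hcert : 2 * specNorm (Psi x) ^ 2 +
        ∑ a : Fin k, ∑ b ∈ Finset.Ioi a,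
          MrowPerpNorm x a b * MrowPerpNorm x b a / rho x z a b ≤ z) :
    SolvesSDP x X := by
  subst hX
  exact dual_certificate_corollary_implies_SDP_optimal_general hn x z
    (fun a b hab i => (uvec_nonneg_iff x z i).2 (hz.2 ⟨a, b, i, hab, rfl⟩)) hρ hcert
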